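/- For every integer r ≥ 1, the map P_r : M_{r,∞} → ℤ₂^× sending σ to its common value P_r(σ) is a group homomorphism whose kernel is exactly B_{r,∞}. -/

import Mathlib

/-- Nodes of the infinite binary rooted tree `T_∞` are finite words over `{a,b}`,
encoded as `List Bool` with `a = false` and `b = true`; children of `w` are
`w ++ [false]` and `w ++ [true]`. An automorphism of `T_∞`. -/
def IsTreeAut (σ : List Bool → List Bool) : Prop :=
  Function.Bijective σ ∧ (∀ w, (σ w).length = w.length) ∧
    ∀ w s, ∃ t, σ (w ++ [s]) = σ w ++ [t]

/-- The parity `Par(σ,x) ∈ {0,1}`: `0` if `σ(xa) = σ(x)a`, and `1` otherwise. -/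
def par (σ : List Bool → List Bool) (x : List Bool) : ℕ :=
  if σ (x ++ [false]) = σ x ++ [false] then 0 else 1

/-- `W(r,i)`: the words `s₁ ⋯ s_{ri−1}` of length `r*i − 1` over `{a,b}` with
`s_j = a` whenever `r ∣ j`. -/
noncomputable def Wset (r i : ℕ) : Finset (List Bool) :=
  ((Finset.univ : Finset (Fin (r*i-1) → Bool)).filter
    (fun s => ∀ j : Fin (r*i-1), r ∣ (j:ℕ)+1 → s j = false)).image List.ofFn

/-- `Q_r(σ,x) := Σ_{i≥1} 2^i Σ_{w ∈ W(r,i)} Par(σ, xw)` in `ℤ₂`. -/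
noncomputable def Qr (r : ℕ) (σ : List Bool → List Bool) (x : List Bool) : ℤ_[2] :=
  ∑' i : ℕ, (2:ℤ_[2])^(i+1) * ∑ w ∈ Wset r (i+1), (par σ (x ++ w) : ℤ_[2])

/-- `P_r(σ,x) := (−1)^{Par(σ,x)} + Q_r(σ,xb) − Q_r(σ,xa)` in `ℤ₂`. -/
noncomputable def Pr (r : ℕ) (σ : List Bool → List Bool) (x : List Bool) : ℤ_[2] :=
  (-1:ℤ_[2])^(par σ x) + Qr r σ (x ++ [true]) - Qr r σ (x ++ [false])

/-- `M_{r,∞}`: tree automorphisms for which `P_r(σ,·)` is constant. -/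
def Mset (r : ℕ) : Set (List Bool → List Bool) :=
  {σ | IsTreeAut σ ∧ ∀ x₁ x₂ : List Bool, Pr r σ x₁ = Pr r σ x₂}

/-- `B_{r,∞}`: elements of `M_{r,∞}` with common value `P_r(σ) = 1`. -/
def Bset (r : ℕ) : Set (List Bool → List Bool) :=
  {σ | σ ∈ Mset r ∧ Pr r σ [] = 1}

lemma mem_Wset (r i : ℕ) (w : List Bool) :
    w ∈ Wset r i ↔ w.length = r*i-1 ∧ ∀ j, r ∣ j+1 → w.getD j false = false := by
  unfold Wset
  simp only [Finset.mem_image, Finset.mem_filter, Finset.mem_univ, true_and]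
  constructor
  · rintro ⟨s, hs, rfl⟩
    refine ⟨by simp, fun j hj => ?_⟩
    by_cases h : j < r*i-1
    · have := hs ⟨j, h⟩ hj
      simp [List.getD, h, this]
    · simp [List.getD, h]
  · rintro ⟨hl, h⟩
    refine ⟨fun j => w.getD j false, fun j hj => h j hj, ?_⟩
    apply List.ext_getElem
    · simp [hl]
    · intro n h1 h2
      simp [List.getD, h2]

lemma mem_Wset_one (r : ℕ) (hr : 1 ≤ r) (w : List Bool) :
    w ∈ Wset r 1 ↔ w.length = r-1 := by
  rw [mem_Wset, mul_one]
  refine ⟨fun h => h.1, fun h => ⟨h, fun j hj => ?_⟩⟩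
  have := Nat.le_of_dvd (by omega) hj
  rw [List.getD_eq_default]
  omega

lemma sum_Wset_succ (r : ℕ) (hr : 1 ≤ r) (i : ℕ) (f : List Bool → ℤ_[2]) :
    ∑ u ∈ Wset r (i+2), f u = ∑ w ∈ Wset r 1, ∑ v ∈ Wset r (i+1), f (w ++ [false] ++ v) := by
  rw [← Finset.sum_product']
  symm
  have e : r*(i+2)-1 = (r - 1) + 1 + (r*(i+1)-1) := by
    have : r*(i+2) = r*(i+1) + r := by ring
    have : 1 ≤ r*(i+1) := Nat.mul_pos hr (by omega)
    omega
  have e1 : 1 ≤ r*(i+1) := Nat.mul_pos hr (by omega)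
  refine Finset.sum_nbij' (fun p => p.1 ++ [false] ++ p.2)
    (fun u => (u.take (r-1), u.drop r)) ?_ ?_ ?_ ?_ ?_
  · rintro ⟨w, v⟩ h
    simp only [Finset.mem_product, mem_Wset_one r hr] at h
    obtain ⟨h1, h2⟩ := h
    rw [mem_Wset] at h2
    rw [mem_Wset]
    refine ⟨by simp only [List.length_append, List.length_singleton]; omega, fun j hj => ?_⟩
    dsimp only
    have hrj := Nat.le_of_dvd (by omega) hj
    by_cases hj' : j = r - 1
    · rw [List.getD_append _ _ _ _ (by simp; omega), List.getD_append_right _ _ _ _ (by omega)]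
      have : j - w.length = 0 := by omega
      simp [this]
    · rw [List.getD_append_right _ _ _ _ (by simp; omega)]
      apply h2.2
      have : j - (w ++ [false]).length + 1 = (j + 1) - r := by simp; omega
      rw [this]
      exact Nat.dvd_sub hj dvd_rfl
  · intro u hu
    rw [mem_Wset] at hu
    simp only [Finset.mem_product, mem_Wset_one r hr]
    refine ⟨by simp; omega, ?_⟩
    rw [mem_Wset]
    refine ⟨by simp; omega, fun j hj => ?_⟩
    have := hu.2 (r + j) (by rw [add_assoc]; exact (Nat.dvd_add_right dvd_rfl).2 hj)
    simpa [List.getD] using this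
  · rintro ⟨w, v⟩ h
    simp only [Finset.mem_product, mem_Wset_one r hr] at h
    obtain ⟨h1, h2⟩ := h
    ext1
    · simp [← h1]
    · have : r = (w ++ [false]).length := by simp; omega
      dsimp only
      rw [this, List.drop_left]
  · intro u hu
    rw [mem_Wset] at hu
    have h0 := hu.2 (r-1) (by rw [Nat.sub_add_cancel hr])
    have hlt : r - 1 < u.length := by omega
    have : u.drop (r-1) = false :: u.drop r := by
      rw [List.drop_eq_getElem_cons hlt, Nat.sub_add_cancel hr]
      simp [List.getD, hlt] at h0
      rw [h0]
    dsimp only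
    rw [List.append_assoc, List.singleton_append, ← this, List.take_append_drop]
  · intros; rfl

lemma summable_aux (r : ℕ) (σ : List Bool → List Bool) (x : List Bool) :
    Summable (fun i : ℕ => (2:ℤ_[2])^(i+1) * ∑ w ∈ Wset r (i+1), (par σ (x ++ w) : ℤ_[2])) := by
  apply Summable.of_norm_bounded (g := fun i : ℕ => ((1/2:ℝ))^i) summable_geometric_two
  intro i
  rw [norm_mul, norm_pow]
  have h2 : ‖(2:ℤ_[2])‖ = 1/2 := by
    have := PadicInt.norm_p (p := 2)
    norm_num at this
    rw [this]
  rw [h2, pow_succ]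
  have := PadicInt.norm_le_one (∑ w ∈ Wset r (i+1), (par σ (x ++ w) : ℤ_[2]))
  have h3 : (0:ℝ) < (1/2)^i := by positivity
  have h4 := norm_nonneg (∑ w ∈ Wset r (i+1), (par σ (x ++ w) : ℤ_[2]))
  nlinarith

lemma Qr_rec (r : ℕ) (hr : 1 ≤ r) (σ : List Bool → List Bool) (x : List Bool) :
    Qr r σ x = 2 * ∑ w ∈ Wset r 1, ((par σ (x ++ w) : ℤ_[2]) + Qr r σ (x ++ w ++ [false])) := by
  rw [Finset.sum_add_distrib, mul_add]
  conv_lhs => unfold Qr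
  rw [(summable_aux r σ x).tsum_eq_zero_add]
  congr 1
  · unfold Qr
    rw [← Summable.tsum_finsetSum (fun w _ => summable_aux r σ (x ++ w ++ [false])), ← Summable.tsum_mul_left]
    · congr 1
      ext1 i
      rw [show i + 1 + 1 = i + 2 from rfl, sum_Wset_succ r hr, ← Finset.mul_sum, ← mul_assoc]
      congr 1
      · ring
      · simp [List.append_assoc]
    · exact summable_sum (fun w _ => summable_aux r σ (x ++ w ++ [false]))

lemma par_cases {σ : List Bool → List Bool} (h : IsTreeAut σ) (x : List Bool) :
    (par σ x = 0 ∧ σ (x ++ [false]) = σ x ++ [false] ∧ σ (x ++ [true]) = σ x ++ [true]) ∨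
    (par σ x = 1 ∧ σ (x ++ [false]) = σ x ++ [true] ∧ σ (x ++ [true]) = σ x ++ [false]) := by
  obtain ⟨s, hs⟩ := h.2.2 x false
  obtain ⟨t, ht⟩ := h.2.2 x true
  have hne : s ≠ t := by
    rintro rfl
    have := h.1.1 (hs.trans ht.symm)
    simp at this
  unfold par
  rw [hs, ht]
  cases s <;> cases t <;> simp_all

lemma aut_append {σ : List Bool → List Bool} (h : IsTreeAut σ) (x w : List Bool) :
    ∃ v, v.length = w.length ∧ σ (x ++ w) = σ x ++ v := by
  induction w using List.reverseRecOn with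
  | nil => exact ⟨[], rfl, by simp⟩
  | append_singleton w s ih =>
    obtain ⟨v, hv, e⟩ := ih
    obtain ⟨t, ht⟩ := h.2.2 (x ++ w) s
    exact ⟨v ++ [t], by simp [hv], by rw [← List.append_assoc, ht, e, List.append_assoc]⟩

lemma sum_aut (r : ℕ) (hr : 1 ≤ r) {σ : List Bool → List Bool} (h : IsTreeAut σ)
    (x : List Bool) (f : List Bool → ℤ_[2]) :
    ∑ w ∈ Wset r 1, f (σ x ++ w) = ∑ w ∈ Wset r 1, f (σ (x ++ w)) := by
  choose g hg1 hg2 using aut_append h x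
  have hm : Set.MapsTo g (Wset r 1) (Wset r 1) := by
    intro w hw
    rw [Finset.mem_coe, mem_Wset_one r hr] at *
    rw [hg1, hw]
  have hi : Set.InjOn g (Wset r 1) := by
    intro a _ b _ hab
    have : σ (x ++ a) = σ (x ++ b) := by rw [hg2, hg2, hab]
    simpa using h.1.1 this
  symm
  refine Finset.sum_nbij g hm hi (Finset.surjOn_of_injOn_of_card_le _ hm hi le_rfl) ?_
  intro w _
  rw [hg2]

lemma IsTreeAut.comp {σ τ : List Bool → List Bool} (h : IsTreeAut σ) (h' : IsTreeAut τ) :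
    IsTreeAut (σ ∘ τ) := by
  refine ⟨h.1.comp h'.1, fun w => by simp [h.2.1, h'.2.1], fun w s => ?_⟩
  obtain ⟨t, ht⟩ := h'.2.2 w s
  obtain ⟨u, hu⟩ := h.2.2 (τ w) t
  exact ⟨u, by simp [ht, hu]⟩

lemma D_rec (r : ℕ) (hr : 1 ≤ r) {σ τ : List Bool → List Bool} (h : σ ∈ Mset r)
    (h' : IsTreeAut τ) (x : List Bool) :
    Qr r (σ ∘ τ) x - Qr r σ (τ x) - Pr r σ [] * Qr r τ x =
    2 * ∑ w ∈ Wset r 1, (Qr r (σ ∘ τ) (x ++ w ++ [false]) - Qr r σ (τ (x ++ w ++ [false]))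
      - Pr r σ [] * Qr r τ (x ++ w ++ [false])) := by
  rw [Qr_rec r hr (σ ∘ τ) x, Qr_rec r hr σ (τ x), Qr_rec r hr τ x,
    sum_aut r hr h' x (fun y => (par σ y : ℤ_[2]) + Qr r σ (y ++ [false])),
    mul_left_comm, ← mul_sub, ← mul_sub, Finset.mul_sum, ← Finset.sum_sub_distrib,
    ← Finset.sum_sub_distrib]
  congr 1
  refine Finset.sum_congr rfl fun w _ => ?_
  generalize x ++ w = y
  have hP : Pr r σ [] = Pr r σ (τ y) := h.2 _ _
  have hP' := hP
  rw [Pr.eq_def r σ (τ y)] at hP'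
  have hc : (σ ∘ τ) (y ++ [false]) = σ (τ (y ++ [false])) := rfl
  have hd : (σ ∘ τ) y = σ (τ y) := rfl
  rcases par_cases h' y with ⟨p, e1, e2⟩ | ⟨p, e1, e2⟩ <;>
  rcases par_cases h.1 (τ y) with ⟨q, f1, f2⟩ | ⟨q, f1, f2⟩ <;>
  rcases par_cases (h.1.comp h') y with ⟨s, g1, g2⟩ | ⟨s, g1, g2⟩ <;>
  rw [hc, hd, e1] at g1 <;> simp [f1, f2] at g1 <;>
  rw [p, q, s, e1] <;> rw [q] at hP' <;> push_cast <;> first | linear_combination 0 | linear_combination -hP'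

lemma Qr_comp (r : ℕ) (hr : 1 ≤ r) {σ τ : List Bool → List Bool} (h : σ ∈ Mset r)
    (h' : IsTreeAut τ) (x : List Bool) :
    Qr r (σ ∘ τ) x = Qr r σ (τ x) + Pr r σ [] * Qr r τ x := by
  have key : ∀ n : ℕ, ∀ x, (2:ℤ_[2])^n ∣
      Qr r (σ ∘ τ) x - Qr r σ (τ x) - Pr r σ [] * Qr r τ x := by
    intro n
    induction n with
    | zero => simp
    | succ n ih =>
      intro x
      rw [D_rec r hr h h', pow_succ']
      exact mul_dvd_mul_left _ (Finset.dvd_sum fun w _ => ih _)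
  have : Qr r (σ ∘ τ) x - Qr r σ (τ x) - Pr r σ [] * Qr r τ x = 0 := by
    by_contra hne
    have h1 := key ((Qr r (σ ∘ τ) x - Qr r σ (τ x) - Pr r σ [] * Qr r τ x).valuation + 1) x
    have h2 := (PadicInt.mem_span_pow_iff_le_valuation (p := 2) _ hne _).1
      (Ideal.mem_span_singleton.2 (by exact_mod_cast h1))
    omega
  linear_combination this

lemma Pr_isUnit (r : ℕ) (hr : 1 ≤ r) (σ : List Bool → List Bool) (x : List Bool) :
    IsUnit (Pr r σ x) := by
  by_contra hu
  have hm : ∀ z : ℤ_[2], ¬ IsUnit z ↔ (2:ℤ_[2]) ∣ z := by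
    intro z
    rw [PadicInt.not_isUnit_iff, PadicInt.norm_lt_one_iff_dvd]
    simp
  rw [hm] at hu
  have h1 : (2:ℤ_[2]) ∣ Qr r σ (x ++ [true]) := by rw [Qr_rec r hr]; exact dvd_mul_right _ _
  have h2 : (2:ℤ_[2]) ∣ Qr r σ (x ++ [false]) := by rw [Qr_rec r hr]; exact dvd_mul_right _ _
  have h3 : (2:ℤ_[2]) ∣ (-1)^(par σ x) := by
    have : (-1:ℤ_[2])^(par σ x) = Pr r σ x - Qr r σ (x ++ [true]) + Qr r σ (x ++ [false]) := by
      unfold Pr; ring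
    rw [this]
    exact dvd_add (dvd_sub hu h1) h2
  rw [← hm] at h3
  exact h3 ((isUnit_one.neg).pow _)

lemma Pr_comp (r : ℕ) (hr : 1 ≤ r) {σ τ : List Bool → List Bool} (h : σ ∈ Mset r)
    (h' : τ ∈ Mset r) (y : List Bool) : Pr r (σ ∘ τ) y = Pr r σ [] * Pr r τ y := by
  have hP : Pr r σ [] = Pr r σ (τ y) := h.2 _ _
  rw [Pr.eq_def r (σ ∘ τ) y, Qr_comp r hr h h'.1, Qr_comp r hr h h'.1]
  have e1 := Pr.eq_def r τ y
  rw [Pr.eq_def r σ (τ y)] at hP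
  have hc : (σ ∘ τ) (y ++ [false]) = σ (τ (y ++ [false])) := rfl
  have hd : (σ ∘ τ) y = σ (τ y) := rfl
  rcases par_cases h'.1 y with ⟨p, a1, a2⟩ | ⟨p, a1, a2⟩ <;>
  rcases par_cases h.1 (τ y) with ⟨q, f1, f2⟩ | ⟨q, f1, f2⟩ <;>
  rcases par_cases (h.1.comp h'.1) y with ⟨s, g1, g2⟩ | ⟨s, g1, g2⟩ <;>
  rw [hc, hd, a1] at g1 <;> simp [f1, f2] at g1 <;>
  rw [s, a1, a2] <;> rw [q] at hP <;> rw [p] at e1 <;>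
  first
  | linear_combination -hP - Pr r σ [] * e1
  | linear_combination hP - Pr r σ [] * e1

theorem Pr_hom_ker (r : ℕ) (hr : 1 ≤ r) :
    (∀ σ ∈ Mset r, IsUnit (Pr r σ [])) ∧
    (Pr r id [] = 1) ∧
    (∀ σ τ : List Bool → List Bool, σ ∈ Mset r → τ ∈ Mset r →
      Pr r (σ ∘ τ) [] = Pr r σ [] * Pr r τ []) ∧
    (∀ σ ∈ Mset r, (Pr r σ [] = 1 ↔ σ ∈ Bset r)) := by
  refine ⟨fun σ _ => Pr_isUnit r hr σ [], ?_, ?_, ?_⟩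
  · simp [Pr, Qr, par]
  · intro σ τ h h'
    exact Pr_comp r hr h h' []
  · intro σ h
    exact ⟨fun e => ⟨h, e⟩, fun e => e.2⟩
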